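/- arXiv:2205.15280 — 4 statements merged into one kernel-verified Lean document; each statement's English description precedes it below -/
import Mathlib

section
/- Let Y be a real-valued random variable admitting a density f_Y with respect to Lebesgue measure that is symmetric (f_Y(y) = f_Y(-y) for all y) and non-increasing in |y| (i.e., f_Y(y) ≥ f_Y(y') whenever |y| ≤ |y'|), and let F_Y denote its cumulative distribution function. Then for every t > 0 and every x ∈ ℝ, F_Y(t - x) + F_Y(t + x) ≤ 2 F_Y(t); that is, the function φ_t(x) = F_Y(t - x) + F_Y(t + x) attains its maximum at x = 0. -/
open MeasureTheory

/-!
Reflecting about `t > 0` sends each point of `(t, t + x]` to a point that is closer to the origin,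
where the density is at least as large. So `(t, t + x]` has at most the mass of `(t - x, t]`:
the CDF gains no more to the right of `t` than it loses to the left.
-/

theorem abs_two_mul_sub_le_abs {R : Type*} [CommRing R] [LinearOrder R] [IsStrictOrderedRing R]
    {t u : R} (ht : 0 ≤ t) (htu : t ≤ u) : |2 * t - u| ≤ |u| := by
  rw [abs_of_nonneg (ht.trans htu), abs_le]
  constructor <;> linarith

theorem setLIntegral_Ioc_comp_sub_left (g : ℝ → ENNReal) (c a b : ℝ) :
    ∫⁻ u in Set.Ioc a b, g (c - u) = ∫⁻ u in Set.Ioc (c - b) (c - a), g u := by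
  have hpreimage : (fun u => c - u) ⁻¹' Set.Ico (c - b) (c - a) = Set.Ioc a b := by
    simp only [Set.preimage_const_sub_Ico, sub_sub_cancel]
  calc ∫⁻ u in Set.Ioc a b, g (c - u)
      = ∫⁻ u in Set.Ico (c - b) (c - a), g u := by
        rw [← hpreimage]
        exact (Measure.measurePreserving_sub_left volume c).setLIntegral_comp_preimage_emb
          (MeasurableEquiv.subLeft c).measurableEmbedding g _
    _ = ∫⁻ u in Set.Ioc (c - b) (c - a), g u := setLIntegral_congr Ico_ae_eq_Ioc

theorem withDensity_Ioc_add_le_withDensity_Ioc_sub {g : ℝ → ENNReal} {t : ℝ}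
    (hg : ∀ᵐ u, t < u → g u ≤ g (2 * t - u)) (x : ℝ) :
    volume.withDensity g (Set.Ioc t (t + x)) ≤ volume.withDensity g (Set.Ioc (t - x) t) := by
  rw [withDensity_apply _ measurableSet_Ioc, withDensity_apply _ measurableSet_Ioc]
  calc ∫⁻ u in Set.Ioc t (t + x), g u
      ≤ ∫⁻ u in Set.Ioc t (t + x), g (2 * t - u) :=
        setLIntegral_mono_ae' measurableSet_Ioc (hg.mono fun _ hu hmem => hu hmem.1)
    _ = ∫⁻ u in Set.Ioc (2 * t - (t + x)) (2 * t - t), g u :=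
        setLIntegral_Ioc_comp_sub_left g (2 * t) t (t + x)
    _ = ∫⁻ u in Set.Ioc (t - x) t, g u := by
        congr 3 <;> ring

theorem measure_Iic_add_measure_Ioc {α : Type*} [TopologicalSpace α] [LinearOrder α]
    [OrderClosedTopology α] [MeasurableSpace α] [OpensMeasurableSpace α] (ν : Measure α)
    {a b : α} (hab : a ≤ b) : ν (Set.Iic a) + ν (Set.Ioc a b) = ν (Set.Iic b) := by
  rw [← measure_union (Set.Iic_disjoint_Ioc le_rfl) measurableSet_Ioc,
    Set.Iic_union_Ioc_eq_Iic hab]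

theorem measure_Iic_add_measure_Iic_le_two_mul {α : Type*} [TopologicalSpace α] [LinearOrder α]
    [OrderClosedTopology α] [MeasurableSpace α] [OpensMeasurableSpace α] {ν : Measure α}
    {a b c : α} (hab : a ≤ b) (hbc : b ≤ c) (h : ν (Set.Ioc b c) ≤ ν (Set.Ioc a b)) :
    ν (Set.Iic a) + ν (Set.Iic c) ≤ 2 * ν (Set.Iic b) :=
  calc ν (Set.Iic a) + ν (Set.Iic c)
      = ν (Set.Iic a) + (ν (Set.Iic b) + ν (Set.Ioc b c)) := by
        rw [measure_Iic_add_measure_Ioc ν hbc]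
    _ ≤ ν (Set.Iic a) + (ν (Set.Iic b) + ν (Set.Ioc a b)) := by gcongr
    _ = ν (Set.Iic b) + (ν (Set.Iic a) + ν (Set.Ioc a b)) := add_left_comm _ _ _
    _ = 2 * ν (Set.Iic b) := by rw [measure_Iic_add_measure_Ioc ν hab, two_mul]

theorem stmt0_general {Ω : Type*} [MeasurableSpace Ω] {μ : Measure Ω} {Y : Ω → ℝ}
    (hY : AEMeasurable Y μ) {g : ℝ → ENNReal} (hdensity : μ.map Y = volume.withDensity g)
    {t : ℝ} (hg : ∀ᵐ u, t < u → g u ≤ g (2 * t - u)) (x : ℝ) :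
    μ (Y ⁻¹' Set.Iic (t - x)) + μ (Y ⁻¹' Set.Iic (t + x)) ≤ 2 * μ (Y ⁻¹' Set.Iic t) := by
  wlog hx : 0 ≤ x generalizing x
  · simpa only [sub_neg_eq_add, ← sub_eq_add_neg, add_comm] using this (-x) (by linarith)
  simp only [← Measure.map_apply_of_aemeasurable hY measurableSet_Iic, hdensity]
  exact measure_Iic_add_measure_Iic_le_two_mul (sub_le_self t hx) (le_add_of_nonneg_right hx)
    (withDensity_Ioc_add_le_withDensity_Ioc_sub hg x)

/-- If a real random variable `Y` has a density `fY` (w.r.t. Lebesgue measure) that is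
symmetric about `0` and non-increasing in `|y|`, then for every `t > 0` and every `x`,
`F_Y(t - x) + F_Y(t + x) ≤ 2 F_Y(t)`, where `F_Y` is the CDF of `Y`. -/
theorem stmt0 {Ω : Type*} [MeasurableSpace Ω] (ℙ : Measure Ω) [IsProbabilityMeasure ℙ]
    (Y : Ω → ℝ) (hY : Measurable Y) (fY : ℝ → ℝ) (hfY_nonneg : ∀ y, 0 ≤ fY y)
    (hdensity : Measure.map Y ℙ = volume.withDensity (fun y => ENNReal.ofReal (fY y)))
    (hsymm : ∀ y, fY (-y) = fY y)
    (hmono : ∀ y y' : ℝ, |y| ≤ |y'| → fY y' ≤ fY y) :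
    ∀ t : ℝ, 0 < t → ∀ x : ℝ,
      ℙ (Y ⁻¹' Set.Iic (t - x)) + ℙ (Y ⁻¹' Set.Iic (t + x)) ≤ 2 * ℙ (Y ⁻¹' Set.Iic t) :=
  fun _ ht => stmt0_general hY.aemeasurable hdensity <| .of_forall fun _ hu =>
    ENNReal.ofReal_le_ofReal <| hmono _ _ <| abs_two_mul_sub_le_abs ht.le hu.le
end

section
/- Let X and Y be independent real-valued random variables, where Y admits a density f_Y with respect to Lebesgue measure that is symmetric (f_Y(y) = f_Y(-y) for all y) and non-increasing in |y|. Then for every t > 0, P(|X + Y| ≥ t) ≥ P(|Y| ≥ t). -/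
open MeasureTheory

/-!
Conditionally on `X = x`, the event `‖X + Y‖ < t` says that `Y` lies in the ball of radius `t`
about `-x`. This ball has the same reference measure as the one about `0`, and since the density of
`Y` decreases with the norm, the part of the shifted ball outside the centred one carries at most as
much mass as the part of the centred ball outside the shifted one. Averaging over `x` gives
`P(‖X + Y‖ < t) ≤ P(‖Y‖ < t)`, and the theorem follows by passing to complements.
-/

open scoped ENNReal

section Rearrangement

variable {α : Type*} [MeasurableSpace α] {μ : Measure α} {s t : Set α}

theorem measure_sdiff_le_measure_sdiff_of_measure_le (hs : MeasurableSet s) (ht : MeasurableSet t)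
    (hs_fin : μ s ≠ ∞) (hst : μ s ≤ μ t) : μ (s \ t) ≤ μ (t \ s) := by
  have inter_fin : μ (s ∩ t) ≠ ∞ := measure_ne_top_of_subset Set.inter_subset_left hs_fin
  refine (ENNReal.add_le_add_iff_left inter_fin).1 ?_
  rwa [measure_inter_add_sdiff s ht, Set.inter_comm, measure_inter_add_sdiff t hs]

theorem setLIntegral_le_setLIntegral_of_measure_le {f : α → ℝ≥0∞}
    (hs : MeasurableSet s) (ht : MeasurableSet t) (hs_fin : μ s ≠ ∞) (hst : μ s ≤ μ t)
    (hf : ∀ x ∈ s \ t, ∀ y ∈ t \ s, f x ≤ f y) :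
    ∫⁻ x in s, f x ∂μ ≤ ∫⁻ x in t, f x ∂μ := by
  set c : ℝ≥0∞ := ⨆ x ∈ s \ t, f x
  have sdiff_le : ∫⁻ x in s \ t, f x ∂μ ≤ ∫⁻ x in t \ s, f x ∂μ :=
    calc ∫⁻ x in s \ t, f x ∂μ
      _ ≤ ∫⁻ _ in s \ t, c ∂μ := setLIntegral_mono' (hs.diff ht) fun x hx ↦ le_biSup f hx
      _ = c * μ (s \ t) := setLIntegral_const _ _
      _ ≤ c * μ (t \ s) := by
        gcongr c * ?_
        exact measure_sdiff_le_measure_sdiff_of_measure_le hs ht hs_fin hst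
      _ = ∫⁻ _ in t \ s, c ∂μ := (setLIntegral_const _ _).symm
      _ ≤ ∫⁻ x in t \ s, f x ∂μ :=
        setLIntegral_mono' (ht.diff hs) fun y hy ↦ iSup₂_le fun x hx ↦ hf x hx y hy
  rw [← lintegral_inter_add_sdiff f s ht, ← lintegral_inter_add_sdiff f t hs, Set.inter_comm]
  gcongr

end Rearrangement

theorem conv_apply_le_of_forall_preimage_add_le {M : Type*} [AddMonoid M] [MeasurableSpace M]
    [MeasurableAdd₂ M] {ν ρ : Measure M} [IsProbabilityMeasure ν] [SFinite ρ] {s : Set M}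
    {c : ℝ≥0∞} (hs : MeasurableSet s) (h : ∀ x, ρ ((x + ·) ⁻¹' s) ≤ c) : (ν ∗ ρ) s ≤ c := by
  rw [Measure.conv, Measure.map_apply measurable_add hs, Measure.prod_apply (measurable_add hs)]
  exact lintegral_le_const (ae_of_all _ h)

section RadiallyDecreasingDensity

variable {E : Type*} [SeminormedAddCommGroup E] [ProperSpace E] [MeasurableSpace E] [BorelSpace E]
  {μ : Measure E} [μ.IsAddLeftInvariant] [IsFiniteMeasureOnCompacts μ] {f : E → ℝ≥0∞}

theorem withDensity_ball_le_withDensity_ball_zero (hf : ∀ y y', ‖y‖ ≤ ‖y'‖ → f y' ≤ f y)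
    (x : E) (t : ℝ) :
    μ.withDensity f (Metric.ball x t) ≤ μ.withDensity f (Metric.ball 0 t) := by
  have measure_ball : μ (Metric.ball x t) = μ (Metric.ball 0 t) := by
    rw [← measure_preimage_add μ x (Metric.ball x t), preimage_add_ball, sub_self]
  rw [withDensity_apply _ measurableSet_ball, withDensity_apply _ measurableSet_ball]
  refine setLIntegral_le_setLIntegral_of_measure_le measurableSet_ball measurableSet_ball
    measure_ball_lt_top.ne measure_ball.le fun y hy z hz ↦ hf z y ?_
  have norm_z_lt : ‖z‖ < t := mem_ball_zero_iff.1 hz.1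
  have le_norm_y : t ≤ ‖y‖ := not_lt.1 fun h ↦ hy.2 (mem_ball_zero_iff.2 h)
  exact norm_z_lt.le.trans le_norm_y

theorem conv_withDensity_ball_zero_le (hf : ∀ y y', ‖y‖ ≤ ‖y'‖ → f y' ≤ f y)
    (ν : Measure E) [IsProbabilityMeasure ν] (t : ℝ) :
    (ν ∗ μ.withDensity f) (Metric.ball 0 t) ≤ μ.withDensity f (Metric.ball 0 t) := by
  refine conv_apply_le_of_forall_preimage_add_le measurableSet_ball fun x ↦ ?_
  rw [preimage_add_ball]
  exact withDensity_ball_le_withDensity_ball_zero hf _ t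

theorem stmt1_general {Ω : Type*} [MeasurableSpace Ω] {ℙ : Measure Ω} [IsProbabilityMeasure ℙ]
    {X Y : Ω → E} (hX : AEMeasurable X ℙ) (hY : AEMeasurable Y ℙ)
    (hindep : ProbabilityTheory.IndepFun X Y ℙ) (hdensity : ℙ.map Y = μ.withDensity f)
    (hf : ∀ y y', ‖y‖ ≤ ‖y'‖ → f y' ≤ f y) (t : ℝ) :
    ℙ {ω | t ≤ ‖Y ω‖} ≤ ℙ {ω | t ≤ ‖X ω + Y ω‖} := by
  have measure_eq_one_sub {Z : Ω → E} (hZ : AEMeasurable Z ℙ) :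
      ℙ {ω | t ≤ ‖Z ω‖} = 1 - ℙ.map Z (Metric.ball 0 t) := by
    have := Measure.isProbabilityMeasure_map hZ
    rw [← prob_compl_eq_one_sub measurableSet_ball,
      Measure.map_apply_of_aemeasurable hZ measurableSet_ball.compl]
    congr 1 with ω
    simp
  have map_add_ball_le : ℙ.map (X + Y) (Metric.ball 0 t) ≤ ℙ.map Y (Metric.ball 0 t) := by
    have := Measure.isProbabilityMeasure_map hX
    rw [hindep.map_add_eq_map_conv_map₀ hX hY, hdensity]
    exact conv_withDensity_ball_zero_le hf _ t
  calc ℙ {ω | t ≤ ‖Y ω‖}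
    _ = 1 - ℙ.map Y (Metric.ball 0 t) := measure_eq_one_sub hY
    _ ≤ 1 - ℙ.map (X + Y) (Metric.ball 0 t) := tsub_le_tsub_left map_add_ball_le 1
    _ = ℙ {ω | t ≤ ‖X ω + Y ω‖} := (measure_eq_one_sub (hX.add hY)).symm

end RadiallyDecreasingDensity

/-- If `X` and `Y` are independent real random variables and `Y` has a density `fY`
(w.r.t. Lebesgue measure) that is symmetric about `0` and non-increasing in `|y|`, then
for every `t > 0`, `P(|X + Y| ≥ t) ≥ P(|Y| ≥ t)`. -/
theorem stmt1 {Ω : Type*} [MeasurableSpace Ω] (ℙ : Measure Ω) [IsProbabilityMeasure ℙ]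
    (X Y : Ω → ℝ) (hX : Measurable X) (hY : Measurable Y)
    (hindep : ProbabilityTheory.IndepFun X Y ℙ)
    (fY : ℝ → ℝ) (hfY_nonneg : ∀ y, 0 ≤ fY y)
    (hdensity : Measure.map Y ℙ = volume.withDensity (fun y => ENNReal.ofReal (fY y)))
    (hsymm : ∀ y, fY (-y) = fY y)
    (hmono : ∀ y y' : ℝ, |y| ≤ |y'| → fY y' ≤ fY y) :
    ∀ t : ℝ, 0 < t →
      ℙ {ω | t ≤ |Y ω|} ≤ ℙ {ω | t ≤ |X ω + Y ω|} :=
  fun t _ ↦ stmt1_general hX.aemeasurable hY.aemeasurable hindep hdensity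
    (fun y y' h ↦ ENNReal.ofReal_le_ofReal (hmono y y' h)) t
end

section
/- Let X and Y be independent real-valued random variables, where Y admits a density f_Y with respect to Lebesgue measure that is symmetric (f_Y(y) = f_Y(-y) for all y) and strictly decreasing in |y| (i.e., f_Y(y) > f_Y(y') whenever |y| < |y'|), and suppose P(X ≠ 0) > 0. Then for every t > 0, P(|X + Y| ≥ t) > P(|Y| ≥ t). -/
open MeasureTheory

/-!
Condition on `X = x ≠ 0`. The reflection `y ↦ -x - y` preserves the reference measure and exchanges
`{t ≤ ‖y‖}` with `{t ≤ ‖x + y‖}`. On the difference `{‖y‖ < t ≤ ‖x + y‖}`, which contains a nonempty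
open set, it moves every point to one of strictly smaller density, so translating by `x` strictly
increases the tail probability. Integrating over the law of `X` preserves the strict inequality
because `X` charges `{x ≠ 0}`.
-/

open Set
open scoped ENNReal

theorem withDensity_lt_withDensity_preimage {α : Type*} [MeasurableSpace α] {μ : Measure α}
    {f : α → ℝ≥0∞} {σ : α → α} {s : Set α} (hf : AEMeasurable f μ)
    (hσ : MeasurePreserving σ μ μ) (hσ_inv : Function.Involutive σ) (hs : MeasurableSet s)
    (hs_fin : μ.withDensity f s ≠ ∞) (hs_pos : μ (σ ⁻¹' s \ s) ≠ 0)
    (hlt : ∀ y ∉ s, σ y ∈ s → f (σ y) < f y) :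
    μ.withDensity f s < μ.withDensity f (σ ⁻¹' s) := by
  have hs' : MeasurableSet (σ ⁻¹' s) := hσ.measurable hs
  have hswap : σ ⁻¹' (s \ σ ⁻¹' s) = σ ⁻¹' s \ s := by
    rw [preimage_sdiff, ← preimage_comp, hσ_inv.comp_self, preimage_id]
  have hreflect : μ.withDensity f (s \ σ ⁻¹' s) = ∫⁻ y in σ ⁻¹' s \ s, f (σ y) ∂μ := by
    rw [withDensity_apply _ (hs.diff hs'), ← hswap]
    exact (hσ.setLIntegral_comp_preimage_emb
      (MeasurableEquiv.ofInvolutive σ hσ_inv hσ.measurable).measurableEmbedding f _).symm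
  have hdiff : μ.withDensity f (s \ σ ⁻¹' s) < μ.withDensity f (σ ⁻¹' s \ s) := by
    have hfin := measure_ne_top_of_subset (sdiff_subset (t := σ ⁻¹' s)) hs_fin
    rw [hreflect] at hfin ⊢
    rw [withDensity_apply _ (hs'.diff hs)]
    exact lintegral_strict_mono (by simpa using hs_pos) hf.restrict hfin
      (ae_restrict_of_forall_mem (hs'.diff hs) fun y hy ↦ hlt y hy.2 hy.1)
  rw [← measure_inter_add_sdiff s hs', ← measure_inter_add_sdiff (σ ⁻¹' s) hs, inter_comm _ s]
  exact ENNReal.add_lt_add_left (measure_ne_top_of_subset inter_subset_left hs_fin) hdiff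

section Translation

variable {E : Type*} [NormedAddCommGroup E] [NormedSpace ℝ E]

theorem exists_norm_lt_and_lt_norm_add {x : E} (hx : x ≠ 0) {t : ℝ} (ht : 0 < t) :
    ∃ y : E, ‖y‖ < t ∧ t < ‖x + y‖ := by
  have hx_pos : 0 < ‖x‖ := norm_pos_iff.2 hx
  obtain ⟨r, hr, hrt⟩ : ∃ r, max 0 (t - ‖x‖) < r ∧ r < t :=
    exists_between (max_lt ht (sub_lt_self t hx_pos))
  obtain ⟨hr_pos, hr_gap⟩ := max_lt_iff.1 hr
  have hray : SameRay ℝ x ((r / ‖x‖) • x) := .sameRay_nonneg_smul_right x (by positivity)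
  have hnorm : ‖(r / ‖x‖) • x‖ = r := by
    rw [norm_smul, Real.norm_of_nonneg (by positivity), div_mul_cancel₀ _ hx_pos.ne']
  refine ⟨(r / ‖x‖) • x, hnorm.trans_lt hrt, ?_⟩
  rw [hray.norm_add, hnorm]
  linarith

variable [MeasurableSpace E]

theorem measure_norm_lt_le_norm_add_pos {μ : Measure E} [μ.IsOpenPosMeasure] {x : E} (hx : x ≠ 0)
    {t : ℝ} (ht : 0 < t) : 0 < μ {y | ‖y‖ < t ∧ t ≤ ‖x + y‖} := by
  have hopen : IsOpen {y : E | ‖y‖ < t ∧ t < ‖x + y‖} :=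
    (isOpen_lt continuous_norm continuous_const).and
      (isOpen_lt continuous_const (continuous_norm.comp (continuous_const_add x)))
  exact (hopen.measure_pos μ (exists_norm_lt_and_lt_norm_add hx ht)).trans_le
    (measure_mono fun y hy ↦ ⟨hy.1, hy.2.le⟩)

variable [BorelSpace E]

theorem withDensity_le_norm_lt_withDensity_le_norm_add {μ : Measure E} [μ.IsAddLeftInvariant]
    [μ.IsNegInvariant] [μ.IsOpenPosMeasure] {f : E → ℝ≥0∞} (hf : AEMeasurable f μ) {t : ℝ}
    (ht : 0 < t) (hlt : ∀ y y', ‖y‖ < t → t ≤ ‖y'‖ → f y' < f y)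
    (hfin : μ.withDensity f {y | t ≤ ‖y‖} ≠ ∞) {x : E} (hx : x ≠ 0) :
    μ.withDensity f {y | t ≤ ‖y‖} < μ.withDensity f {y | t ≤ ‖x + y‖} := by
  have hpreimage : (-x - ·) ⁻¹' {y : E | t ≤ ‖y‖} = {y | t ≤ ‖x + y‖} := by
    ext y
    rw [mem_preimage, mem_ofPred_eq, mem_ofPred_eq, ← neg_add', norm_neg]
  have hdiff : {y | t ≤ ‖x + y‖} \ {y | t ≤ ‖y‖} = {y | ‖y‖ < t ∧ t ≤ ‖x + y‖} := by
    ext y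
    simp [and_comm]
  rw [← hpreimage]
  refine withDensity_lt_withDensity_preimage hf (Measure.measurePreserving_sub_left μ (-x))
    (sub_sub_cancel (-x)) (measurableSet_le measurable_const measurable_norm) hfin ?_
    fun y hy hy' ↦ hlt _ _ (not_le.1 hy) hy'
  rw [hpreimage, hdiff]
  exact (measure_norm_lt_le_norm_add_pos hx ht).ne'

end Translation

section Convolution

variable {M : Type*} [AddMonoid M] [MeasurableSpace M] [MeasurableAdd₂ M]
  {ρ ν : Measure M} {s : Set M}

theorem conv_apply [SFinite ν] (hs : MeasurableSet s) :
    (ρ ∗ ν) s = ∫⁻ x, ν ((x + ·) ⁻¹' s) ∂ρ := by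
  rw [Measure.conv, Measure.map_apply measurable_add hs, Measure.prod_apply (measurable_add hs)]
  rfl

theorem lt_conv_apply_of_forall_ne_zero [IsProbabilityMeasure ρ] [IsFiniteMeasure ν]
    (hs : MeasurableSet s) (hρ : ρ {0}ᶜ ≠ 0)
    (hlt : ∀ x ≠ 0, ν s < ν ((x + ·) ⁻¹' s)) : ν s < (ρ ∗ ν) s := by
  have hle (x : M) : ν s ≤ ν ((x + ·) ⁻¹' s) := by
    rcases eq_or_ne x 0 with rfl | hx
    · simp
    · exact (hlt x hx).le
  calc
    ν s = ∫⁻ _, ν s ∂ρ := by simp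
    _ < ∫⁻ x, ν ((x + ·) ⁻¹' s) ∂ρ :=
      lintegral_strict_mono_of_ae_le_of_ae_lt_on
        (measurable_measure_prodMk_left (measurable_add hs)).aemeasurable (by simp)
        (ae_of_all _ hle) hρ (ae_of_all _ hlt)
    _ = (ρ ∗ ν) s := (conv_apply hs).symm

end Convolution

theorem measurable_of_quasiconcaveOn_univ {β : Type*} [TopologicalSpace β] [LinearOrder β]
    [OrderTopology β] [SecondCountableTopology β] [MeasurableSpace β] [BorelSpace β] {f : ℝ → β}
    (hf : QuasiconcaveOn ℝ univ f) : Measurable f :=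
  measurable_of_Ici fun r ↦ by
    simpa only [mem_univ, true_and, preimage, mem_Ici] using (hf r).ordConnected.measurableSet

theorem quasiconcaveOn_univ_of_forall_abs_lt {β : Type*} [Preorder β] {f : ℝ → β}
    (hf : ∀ y y' : ℝ, |y| < |y'| → f y' ≤ f y) : QuasiconcaveOn ℝ univ f := by
  intro r
  refine OrdConnected.convex ⟨fun a ha b hb y hy ↦ ⟨mem_univ y, ?_⟩⟩
  have hcases : y = a ∨ y = b ∨ |y| < |a| ∨ |y| < |b| := by grind
  rcases hcases with rfl | rfl | hya | hyb
  · exact ha.2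
  · exact hb.2
  · exact ha.2.trans (hf y a hya)
  · exact hb.2.trans (hf y b hyb)

theorem stmt2_general {Ω E : Type*} [MeasurableSpace Ω] {ℙ : Measure Ω} [IsProbabilityMeasure ℙ]
    [NormedAddCommGroup E] [NormedSpace ℝ E] [FiniteDimensional ℝ E] [MeasurableSpace E]
    [BorelSpace E] {μ : Measure E} [μ.IsAddHaarMeasure] {X Y : Ω → E} (hX : AEMeasurable X ℙ)
    (hY : AEMeasurable Y ℙ) (hindep : ProbabilityTheory.IndepFun X Y ℙ) {f : E → ℝ≥0∞}
    (hf : AEMeasurable f μ) (hdensity : ℙ.map Y = μ.withDensity f) {t : ℝ} (ht : 0 < t)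
    (hlt : ∀ y y', ‖y‖ < t → t ≤ ‖y'‖ → f y' < f y) (hX0 : 0 < ℙ {ω | X ω ≠ 0}) :
    ℙ {ω | t ≤ ‖Y ω‖} < ℙ {ω | t ≤ ‖X ω + Y ω‖} := by
  have : IsProbabilityMeasure (ℙ.map X) := Measure.isProbabilityMeasure_map hX
  have htail : MeasurableSet {y : E | t ≤ ‖y‖} := measurableSet_le measurable_const measurable_norm
  have hX_law : ℙ.map X {0}ᶜ ≠ 0 := by
    rw [Measure.map_apply_of_aemeasurable hX (measurableSet_singleton 0).compl]
    exact hX0.ne'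
  have hshift (x : E) (hx : x ≠ 0) : ℙ.map Y {y | t ≤ ‖y‖} < ℙ.map Y {y | t ≤ ‖x + y‖} := by
    have hfin : ℙ.map Y {y | t ≤ ‖y‖} ≠ ∞ := measure_ne_top _ _
    rw [hdensity] at hfin ⊢
    exact withDensity_le_norm_lt_withDensity_le_norm_add hf ht hlt hfin hx
  calc
    ℙ {ω | t ≤ ‖Y ω‖} = ℙ.map Y {y | t ≤ ‖y‖} := (Measure.map_apply_of_aemeasurable hY htail).symm
    _ < (ℙ.map X ∗ ℙ.map Y) {y | t ≤ ‖y‖} := lt_conv_apply_of_forall_ne_zero htail hX_law hshift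
    _ = ℙ.map (X + Y) {y | t ≤ ‖y‖} := by rw [hindep.map_add_eq_map_conv_map₀ hX hY]
    _ = ℙ {ω | t ≤ ‖X ω + Y ω‖} := Measure.map_apply_of_aemeasurable (hX.add hY) htail

/-- If `X` and `Y` are independent real random variables, `Y` has a density `fY`
(w.r.t. Lebesgue measure) that is symmetric about `0` and strictly decreasing in `|y|`,
and `P(X ≠ 0) > 0`, then for every `t > 0`, `P(|X + Y| ≥ t) > P(|Y| ≥ t)`. -/
theorem stmt2 {Ω : Type*} [MeasurableSpace Ω] (ℙ : Measure Ω) [IsProbabilityMeasure ℙ]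
    (X Y : Ω → ℝ) (hX : Measurable X) (hY : Measurable Y)
    (hindep : ProbabilityTheory.IndepFun X Y ℙ)
    (fY : ℝ → ℝ) (hfY_nonneg : ∀ y, 0 ≤ fY y)
    (hdensity : Measure.map Y ℙ = volume.withDensity (fun y => ENNReal.ofReal (fY y)))
    (hsymm : ∀ y, fY (-y) = fY y)
    (hstrict : ∀ y y' : ℝ, |y| < |y'| → fY y' < fY y)
    (hX0 : 0 < ℙ {ω | X ω ≠ 0}) :
    ∀ t : ℝ, 0 < t →
      ℙ {ω | t ≤ |Y ω|} < ℙ {ω | t ≤ |X ω + Y ω|} := by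
  have hf_meas : Measurable fY := measurable_of_quasiconcaveOn_univ <|
    quasiconcaveOn_univ_of_forall_abs_lt fun y y' h ↦ (hstrict y y' h).le
  exact fun t ht ↦ stmt2_general hX.aemeasurable hY.aemeasurable hindep
    hf_meas.ennreal_ofReal.aemeasurable hdensity ht
    (fun y y' hy hy' ↦ (ENNReal.ofReal_lt_ofReal_iff_of_nonneg (hfY_nonneg y')).2
      (hstrict y y' (hy.trans_le hy'))) hX0
end

section
/- Let 0 < p < q < 1. For each n, let X_n be a Binomial(n, p) random variable with cumulative distribution function F_{X_n}, and let Y_n be a Binomial(n, q) random variable. Then F_{X_n}(Y_n) converges to 1 in probability: for every δ > 0, P(F_{X_n}(Y_n) < 1 - δ) → 0 as n → ∞. -/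
open MeasureTheory Filter

/-!
By Chebyshev's inequality `Bin(n, p)` concentrates within `o(n)` of `n * p`, and `Bin(n, q)` within
`o(n)` of `n * q`. Hence any `m` strictly between `p` and `q` separates them: `Bin(n, q)` is
eventually above `n * m`, where the cumulative distribution function of `Bin(n, p)` is near `1`.
-/

section

open ProbabilityTheory Set Topology
open scoped unitInterval

theorem integral_id_map_cast_binomial (n : ℕ) (p : I) : ∫ x, x ∂Bin(ℝ, n, p) = n * p := by
  have hsum := congrArg (Polynomial.eval (p : ℝ)) (bernsteinPolynomial.sum_smul ℝ n)
  simp only [bernsteinPolynomial, Polynomial.eval_finsetSum, Nat.range_succ_eq_Iic] at hsum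
  rw [integral_map_cast_binomial]
  simpa [mul_comm] using hsum

theorem variance_id_map_cast_binomial (n : ℕ) (p : I) :
    Var[id; Bin(ℝ, n, p)] = n * p * (1 - p) := by
  have hsum := congrArg (Polynomial.eval (p : ℝ)) (bernsteinPolynomial.variance ℝ n)
  simp only [bernsteinPolynomial, Polynomial.eval_finsetSum, Nat.range_succ_eq_Iic] at hsum
  rw [variance_eq_integral aemeasurable_id]
  simp only [id_eq, integral_id_map_cast_binomial]
  rw [integral_map_cast_binomial]
  simpa [mul_comm, sub_sq_comm] using hsum

theorem map_cast_binomial_abs_sub_ge_le (n : ℕ) (p : I) {c : ℝ} (hc : 0 < c) :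
    Bin(ℝ, n, p) {x | c ≤ |x - n * p|} ≤ ENNReal.ofReal (n * p * (1 - p) / c ^ 2) := by
  have hL2 : MemLp id 2 Bin(ℝ, n, p) :=
    (memLp_two_iff_integrable_sq aestronglyMeasurable_id).2 (integrable_map_cast_binomial _)
  simpa only [id_eq, integral_id_map_cast_binomial, variance_id_map_cast_binomial]
    using meas_ge_le_variance_div_sq hL2 hc

theorem tendsto_map_cast_binomial_abs_sub_ge (p : I) {ε : ℝ} (hε : 0 < ε) :
    Tendsto (fun n : ℕ ↦ Bin(ℝ, n, p) {x | n * ε ≤ |x - n * p|}) atTop (𝓝 0) := by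
  have hbound : Tendsto (fun n : ℕ ↦ ENNReal.ofReal (p * (1 - p) / ε ^ 2 / n)) atTop (𝓝 0) := by
    simpa using ENNReal.tendsto_ofReal
      (tendsto_const_div_atTop_nhds_zero_nat ((p : ℝ) * (1 - p) / ε ^ 2))
  refine tendsto_of_tendsto_of_tendsto_of_le_of_le' tendsto_const_nhds hbound
    (.of_forall fun _ ↦ zero_le) ?_
  filter_upwards [eventually_gt_atTop 0] with n hn
  have hn' : (0 : ℝ) < n := mod_cast hn
  have hvar : (n * p * (1 - p) / (n * ε) ^ 2 : ℝ) = p * (1 - p) / ε ^ 2 / n := by field_simp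
  exact hvar ▸ map_cast_binomial_abs_sub_ge_le n p (mul_pos hn' hε)

theorem tendsto_map_cast_binomial_Ioi (p : I) {m : ℝ} (hm : p < m) :
    Tendsto (fun n : ℕ ↦ Bin(ℝ, n, p) (Ioi (n * m))) atTop (𝓝 0) := by
  refine tendsto_of_tendsto_of_tendsto_of_le_of_le tendsto_const_nhds
    (tendsto_map_cast_binomial_abs_sub_ge p (sub_pos.2 hm)) (fun _ ↦ zero_le)
    fun n ↦ measure_mono fun x (hx : n * m < x) ↦ ?_
  exact le_trans (by linarith) (le_abs_self (x - n * p))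

theorem tendsto_map_cast_binomial_Iio (p : I) {m : ℝ} (hm : m < p) :
    Tendsto (fun n : ℕ ↦ Bin(ℝ, n, p) (Iio (n * m))) atTop (𝓝 0) := by
  refine tendsto_of_tendsto_of_tendsto_of_le_of_le tendsto_const_nhds
    (tendsto_map_cast_binomial_abs_sub_ge p (sub_pos.2 hm)) (fun _ ↦ zero_le)
    fun n ↦ measure_mono fun x (hx : x < n * m) ↦ ?_
  exact le_trans (by linarith) (neg_le_abs (x - n * p))

theorem setOf_cdf_lt_subset_Iio (μ : Measure ℝ) [IsProbabilityMeasure μ] {c δ : ℝ}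
    (hδ : μ.real (Ioi c) ≤ δ) : {x | cdf μ x < 1 - δ} ⊆ Iio c := by
  intro x (hx : cdf μ x < 1 - δ)
  by_contra! hcx
  have hcdf : cdf μ c = 1 - μ.real (Ioi c) := by
    rw [cdf_eq_real, ← compl_Ioi, probReal_compl_eq_one_sub measurableSet_Ioi]
  linarith [monotone_cdf μ (notMem_Iio.1 hcx)]

theorem tendsto_measure_cdf_lt_of_tendsto_tails {ι : Type*} {l : Filter ι} {μ ν : ι → Measure ℝ}
    [∀ i, IsProbabilityMeasure (μ i)] {c : ι → ℝ}
    (hμ : Tendsto (fun i ↦ μ i (Ioi (c i))) l (𝓝 0))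
    (hν : Tendsto (fun i ↦ ν i (Iio (c i))) l (𝓝 0)) {δ : ℝ} (hδ : 0 < δ) :
    Tendsto (fun i ↦ ν i {x | cdf (μ i) x < 1 - δ}) l (𝓝 0) := by
  refine tendsto_of_tendsto_of_tendsto_of_le_of_le' tendsto_const_nhds hν
    (.of_forall fun _ ↦ zero_le) ?_
  filter_upwards [hμ.eventually_le_const (ENNReal.ofReal_pos.2 hδ)] with i hi
  exact measure_mono (setOf_cdf_lt_subset_Iio (μ i) (ENNReal.toReal_le_of_le_ofReal hδ.le hi))

theorem tendsto_map_cast_binomial_cdf_lt {p q : I} (hpq : p < q) {δ : ℝ} (hδ : 0 < δ) :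
    Tendsto (fun n : ℕ ↦ Bin(ℝ, n, q) {x | cdf Bin(ℝ, n, p) x < 1 - δ}) atTop (𝓝 0) := by
  obtain ⟨m, hpm, hmq⟩ := exists_between (Subtype.coe_lt_coe.2 hpq)
  exact tendsto_measure_cdf_lt_of_tendsto_tails (tendsto_map_cast_binomial_Ioi p hpm)
    (tendsto_map_cast_binomial_Iio q hmq) hδ

theorem cdf_map_cast_binomial_natCast (n k : ℕ) (p : I) :
    cdf Bin(ℝ, n, p) k =
      ∑ i ∈ Finset.range (k + 1), (n.choose i : ℝ) * p ^ i * (1 - p) ^ (n - i) := by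
  have hpre : ((↑) : ℕ → ℝ) ⁻¹' Iic (k : ℝ) = Finset.range (k + 1) := by
    ext i; simp
  rw [cdf_eq_real, map_measureReal_apply .of_discrete measurableSet_Iic, hpre,
    ← sum_measureReal_singleton]
  simp only [binomial_real_singleton]

theorem hasLaw_map_cast_binomial_of_measure_eq {Ω : Type*} [MeasurableSpace Ω] {P : Measure Ω}
    {n : ℕ} {p : I} {X : Ω → ℕ} (hX : AEMeasurable X P)
    (hlaw : ∀ k, P {ω | X ω = k} =
      ENNReal.ofReal ((n.choose k : ℝ) * p ^ k * (1 - p) ^ (n - k))) :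
    HasLaw (fun ω ↦ (X ω : ℝ)) Bin(ℝ, n, p) P := by
  have hXlaw : HasLaw X Bin(n, p) P :=
    ⟨hX, Measure.ext_of_singleton fun k ↦ by
      rw [Measure.map_apply_of_aemeasurable hX (measurableSet_singleton k), binomial_singleton]
      exact hlaw k⟩
  exact HasLaw.fun_comp ⟨.of_discrete, rfl⟩ hXlaw

theorem measure_cdf_lt_of_hasLaw {Ω : Type*} [MeasurableSpace Ω] {P : Measure Ω} {X : Ω → ℝ}
    {ν : Measure ℝ} (hX : HasLaw X ν P) (μ : Measure ℝ) (t : ℝ) :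
    P {ω | cdf μ (X ω) < t} = ν {x | cdf μ x < t} :=
  hX.measure_eq (measurableSet_lt (monotone_cdf μ).measurable measurable_const)

end

/-- Let `0 < p < q < 1`. For each `n`, let `F n` be the CDF of a `Binomial(n, p)` variable,
i.e. `F n k = ∑_{i ≤ k} C(n,i) p^i (1-p)^(n-i)`, and let `Y n` be a `Binomial(n, q)` random
variable. Then `F n (Y n)` converges to `1` in probability: for every `δ > 0`,
`P(F n (Y n) < 1 - δ) → 0` as `n → ∞`. -/
theorem stmt4 {Ω : Type*} [MeasurableSpace Ω] (ℙ : Measure Ω) [IsProbabilityMeasure ℙ]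
    (p q : ℝ) (hp : 0 < p) (hpq : p < q) (hq : q < 1)
    (F : ℕ → ℕ → ℝ)
    (hF : ∀ n k, F n k = ∑ i ∈ Finset.range (k + 1),
      (n.choose i : ℝ) * p ^ i * (1 - p) ^ (n - i))
    (Y : ℕ → Ω → ℕ) (hYmeas : ∀ n, Measurable (Y n))
    (hlaw : ∀ n k, ℙ {ω | Y n ω = k} =
      ENNReal.ofReal ((n.choose k : ℝ) * q ^ k * (1 - q) ^ (n - k))) :
    ∀ δ : ℝ, 0 < δ →
      Tendsto (fun n => ℙ {ω | F n (Y n ω) < 1 - δ}) atTop (nhds 0) := by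
  intro δ hδ
  lift p to unitInterval using ⟨hp.le, (hpq.trans hq).le⟩
  lift q to unitInterval using ⟨(hp.trans hpq).le, hq.le⟩
  have hY n := hasLaw_map_cast_binomial_of_measure_eq (hYmeas n).aemeasurable (hlaw n)
  simp only [hF, ← cdf_map_cast_binomial_natCast, measure_cdf_lt_of_hasLaw (hY _)]
  exact tendsto_map_cast_binomial_cdf_lt hpq hδ
end
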